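/- Fix n≥5 and real numbers a₀≠0, b₀≠0, and set h₂ = b₀zⁿ + a₀z²z̄² + b₀z̄ⁿ. For p≥2 define the homological operator L_p: H^n_p → H^n_{p+1} by L_p(χ) = the projection onto δ-order p+1 of 2i{χ, h₂}; this is a well-defined real-linear map. Then for every odd p=2k+1≥3: L_p is injective, and one has the direct sum decomposition of real vector spaces H^n_{p+1} = L_p(H^n_p) ⊕ span_ℝ{ Q_{p+1,0}, Q_{p+1,1}+Q_{p+1,−1} }; in particular the image of L_p has real codimension 2 in H^n_{p+1}. -/

import Mathlib

/-!
In δ-order `m` the resonant monomials are exactly the `Q_{m,j}`, so a real-valued polynomial in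
`H^n_m` amounts to a family `c_j`, `0 ≤ j ≤ ⌊m/2⌋`, with `c_0` real (`Hspace_ext`,
`Hspace_exists`). Throughout, `Q_{m,j}` is `z^(r+nj) z̄^r` with `r + 2j = m`.

For `χ = ∑ c_j Q_{p,j}` and `j ≥ 1` the coefficient of `L_p(χ)` at `Q_{p+1,j}` is
`2in (2j a₀ c_j - b₀ (p - 2j + 2) c_{j-1})`, and the one at `Q_{p+1,0}` is zero
(`homOp_coeff`, `homOp_diag`): of the three terms of `h₂`, the one that lowers `|j|` raises the
δ-order by `n - 3 > 1` and is projected out. Since `p` is odd there is no `c_j` at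
`j = (p+1)/2`, so the equation `g = L_p(χ) + s Q_{p+1,0} + t (Q_{p+1,1} + Q_{p+1,-1})` is solved
downwards in `j`: the equations for `j ≥ 2` determine `c_{j-1}` because `b₀ (p - 2j + 2) ≠ 0`;
with `c_1` known, the complex equation at `j = 1` determines the two real numbers `c_0` and `t`
as its two real components, and the equation at `j = 0` gives `s`. Uniqueness is
`kernel_trivial`, existence is `exists_solution`.
-/

open Complex Finset Asymptotics

noncomputable section

/-- Formal power series in two commuting variables `z`, `z̄`,
represented by coefficient functions: `h k l` is the coefficient of `z^k z̄^l`. -/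
abbrev FS2 : Type := ℕ → ℕ → ℂ

namespace FS2

/-- The constant series `1`. -/
def one : FS2 := fun k l => if k = 0 ∧ l = 0 then 1 else 0

/-- The monomial `z^a z̄^b`. -/
def mono (a b : ℕ) : FS2 := fun k l => if k = a ∧ l = b then 1 else 0

/-- Product of formal power series. -/
def mul (f g : FS2) : FS2 := fun k l =>
  ∑ p ∈ Finset.range (k + 1), ∑ q ∈ Finset.range (l + 1),
    f p q * g (k - p) (l - q)

/-- Powers of a formal power series. -/
def npow (f : FS2) : ℕ → FS2
  | 0 => one
  | n + 1 => mul f (npow f n)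

/-- `∂/∂z`. -/
def dz (f : FS2) : FS2 := fun k l => ((k : ℂ) + 1) * f (k + 1) l

/-- `∂/∂z̄`. -/
def dw (f : FS2) : FS2 := fun k l => ((l : ℂ) + 1) * f k (l + 1)

/-- Poisson bracket `{f,g} = (∂f/∂z)(∂g/∂z̄) − (∂f/∂z̄)(∂g/∂z)`. -/
def pb (f g : FS2) : FS2 := mul (dz f) (dw g) - mul (dw f) (dz g)

/-- Lie derivative `L_χ g = −2i {g, χ}`. -/
def lie (χ g : FS2) : FS2 := (-2 * Complex.I) • pb g χ

/-- Iterated Lie derivative `L_χ^n g`. -/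
def lieIter (χ : FS2) : ℕ → FS2 → FS2
  | 0, g => g
  | n + 1, g => lie χ (lieIter χ n g)

/-- `exp(L_χ) g = Σ_{j≥0} (1/j!) L_χ^j g`.  When `χ` has no terms of total degree
`< 3`, the coefficient of `z^k z̄^l` in `L_χ^j g` vanishes for `j > k + l`, so the
truncated sum below computes the formal exponential exactly. -/
def expLie (χ g : FS2) : FS2 := fun k l =>
  ∑ j ∈ Finset.range (k + l + 1), ((j.factorial : ℂ))⁻¹ * lieIter χ j g k l

/-- A series is real-valued: `h_{kl} = conj h_{lk}`. -/
def IsReal (h : FS2) : Prop := ∀ k l, h k l = (starRingEnd ℂ) (h l k)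

/-- A pair of series has the real symmetry: `f̄_{kl} = conj f_{lk}`. -/
def RealPair (f fb : FS2) : Prop := ∀ k l, fb k l = (starRingEnd ℂ) (f l k)

/-- A pair is area-preserving: the formal Jacobian determinant equals `1`. -/
def UnitJacobian (f fb : FS2) : Prop :=
  mul (dz f) (dw fb) - mul (dw f) (dz fb) = one

/-- No terms of total degree `< 3`. -/
def Ord3 (h : FS2) : Prop := ∀ k l, k + l < 3 → h k l = 0

/-- The rotated series `h(e^{iθ} z, e^{-iθ} z̄)`. -/
def rot (θ : ℝ) (h : FS2) : FS2 := fun k l =>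
  Complex.exp (Complex.I * θ * ((k : ℂ) - (l : ℂ))) * h k l

/-- Substitution of the pair `(φ, φb)` into `g`, i.e. `g(φ(z,z̄), φb(z,z̄))`.
When `φ, φb` have zero constant term, the coefficient of `z^k z̄^l` in
`φ^a φb^b` vanishes for `a + b > k + l`, so the truncated sum below computes
the substitution exactly. -/
def subst (φ φb : FS2) (g : FS2) : FS2 := fun k l =>
  ∑ a ∈ Finset.range (k + l + 1), ∑ b ∈ Finset.range (k + l + 1),
    g a b * mul (npow φ a) (npow φb b) k l

end FS2

/-- The series `(zz̄)² A(zz̄) + (zⁿ + z̄ⁿ) B(z²z̄²)`. -/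
def targetN (n : ℕ) (A B : ℕ → ℝ) : FS2 := fun k l =>
  if k = l ∧ 2 ≤ k then (A (k - 2) : ℂ)
  else if k = l + n ∧ Even l then (B (l / 2) : ℂ)
  else if l = k + n ∧ Even k then (B (k / 2) : ℂ)
  else 0

/-- The series `(zz̄)³ A(zz̄) + (z³ + z̄³) B(zz̄)`. -/
def target3 (A B : ℕ → ℝ) : FS2 := fun k l =>
  if k = l ∧ 3 ≤ k then (A (k - 3) : ℂ)
  else if k = l + 3 then (B l : ℂ)
  else if l = k + 3 then (B k : ℂ)
  else 0


/-- The δ-order of the monomial `z^k z̄^l` (for resonance order `n`):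
`δ = (k+l)/2 − ((n−4)/(2n))·|k−l|`. -/
def deltaOrd (n k l : ℕ) : ℚ :=
  (k + l : ℚ) / 2 - ((n : ℚ) - 4) / (2 * n) * |(k : ℚ) - (l : ℚ)|

/-- `z^k z̄^l` is a resonant monomial of δ-order `m`. -/
def IsResMono (n : ℕ) (m : ℚ) (k l : ℕ) : Prop :=
  (k : ZMod n) = (l : ZMod n) ∧ deltaOrd n k l = m

/-- `H^n_m`: the real vector space of real-valued polynomials supported on
resonant monomials of δ-order `m`. -/
def Hspace (n : ℕ) (m : ℚ) : Submodule ℝ FS2 where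
  carrier := {h | FS2.IsReal h ∧ ∀ k l, h k l ≠ 0 → IsResMono n m k l}
  zero_mem' := by
    refine ⟨fun k l => by simp, fun k l hkl => absurd rfl hkl⟩
  add_mem' := by
    rintro a b ⟨ha1, ha2⟩ ⟨hb1, hb2⟩
    refine ⟨fun k l => ?_, fun k l hkl => ?_⟩
    · show a k l + b k l = (starRingEnd ℂ) (a l k + b l k)
      rw [map_add, ← ha1 k l, ← hb1 k l]
    · by_cases h : a k l = 0
      · refine hb2 k l fun hb0 => hkl ?_
        show a k l + b k l = 0
        rw [h, hb0, add_zero]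
      · exact ha2 k l h
  smul_mem' := by
    rintro r a ⟨ha1, ha2⟩
    refine ⟨fun k l => ?_, fun k l hkl => ?_⟩
    · show r • a k l = (starRingEnd ℂ) (r • a l k)
      rw [ha1 k l, Complex.real_smul, Complex.real_smul, map_mul, Complex.conj_ofReal]
    · refine ha2 k l fun h0 => hkl ?_
      show r • a k l = 0
      rw [h0, smul_zero]


/-- Projection of a series onto its resonant part of δ-order `m`. -/
def projRes (n : ℕ) (m : ℚ) (h : FS2) : FS2 := fun k l =>
  if (k : ZMod n) = (l : ZMod n) ∧ deltaOrd n k l = m then h k l else 0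

/-- The leading part `h₂ = b₀ zⁿ + a₀ z²z̄² + b₀ z̄ⁿ`. -/
def h2lead (n : ℕ) (a0 b0 : ℝ) : FS2 := fun k l =>
  if k = n ∧ l = 0 then (b0 : ℂ)
  else if k = 2 ∧ l = 2 then (a0 : ℂ)
  else if k = 0 ∧ l = n then (b0 : ℂ)
  else 0

/-- The homological operator `L_p(χ) = proj_{δ-order p+1} (2i{χ, h₂})`. -/
def homOp (n : ℕ) (a0 b0 : ℝ) (p : ℕ) (χ : FS2) : FS2 :=
  projRes n ((p : ℚ) + 1) ((2 * Complex.I) • FS2.pb χ (h2lead n a0 b0))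


/-- The resonant monomial `z^(r+nj) z̄^r` is `Q_{m,j}` with `m = r + 2j`. -/
theorem deltaOrd_eval (n : ℕ) (hn : 5 ≤ n) (r j : ℕ) :
    deltaOrd n (r + n * j) r = ((r + 2 * j : ℕ) : ℚ) := by
  have hn0 : (n : ℚ) ≠ 0 := by positivity
  have h0 : (0 : ℚ) ≤ (n : ℚ) * j := by positivity
  unfold deltaOrd
  push_cast
  rw [show (r : ℚ) + n * j - r = n * j by ring, abs_of_nonneg h0]
  field_simp
  ring

theorem deltaOrd_comm (n k l : ℕ) : deltaOrd n k l = deltaOrd n l k := by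
  unfold deltaOrd
  rw [abs_sub_comm, add_comm (k : ℚ)]

theorem isResMono_comm {n : ℕ} {m : ℚ} {k l : ℕ} :
    IsResMono n m k l ↔ IsResMono n m l k := by
  unfold IsResMono
  rw [deltaOrd_comm n k l, eq_comm]

theorem isResMono_of (n : ℕ) (hn : 5 ≤ n) {m r j : ℕ} (h : r + 2 * j = m) :
    IsResMono n (m : ℚ) (r + n * j) r := by
  refine ⟨by simp, ?_⟩
  rw [deltaOrd_eval n hn, h]

theorem isResMono_of_le (n : ℕ) (hn : 5 ≤ n) {m k l : ℕ} (hlk : l ≤ k)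
    (h : IsResMono n (m : ℚ) k l) : ∃ j, l + 2 * j = m ∧ k = l + n * j := by
  obtain ⟨h1, h2⟩ := h
  rw [eq_comm, ZMod.natCast_eq_natCast_iff, Nat.modEq_iff_dvd' hlk] at h1
  obtain ⟨j, hj⟩ := h1
  obtain rfl : k = l + n * j := by omega
  rw [deltaOrd_eval n hn] at h2
  exact ⟨j, by exact_mod_cast h2, rfl⟩

theorem isResMono_iff (n : ℕ) (hn : 5 ≤ n) {m r j : ℕ} :
    IsResMono n (m : ℚ) (r + n * j) r ↔ r + 2 * j = m := by
  refine ⟨fun h => ?_, isResMono_of n hn⟩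
  have h2 := h.2
  rw [deltaOrd_eval n hn] at h2
  exact_mod_cast h2

/-- An element of `H^n_m` is determined by its coefficients at the `Q_{m,j}` with `j ≥ 0`;
here `r = m - 2j` is the exponent of `z̄`. -/
theorem Hspace_ext (n : ℕ) (hn : 5 ≤ n) {m : ℕ} {f g : FS2}
    (hf : f ∈ Hspace n (m : ℚ)) (hg : g ∈ Hspace n (m : ℚ))
    (h : ∀ j r, r + 2 * j = m → f (r + n * j) r = g (r + n * j) r) : f = g := by
  have key : ∀ k l, l ≤ k → f k l = g k l := by
    intro k l hlk
    by_cases hr : IsResMono n (m : ℚ) k l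
    · obtain ⟨j, hj, rfl⟩ := isResMono_of_le n hn hlk hr
      exact h j l hj
    · rw [not_imp_comm.1 (hf.2 k l) hr, not_imp_comm.1 (hg.2 k l) hr]
  funext k l
  rcases le_total l k with hlk | hlk
  · exact key k l hlk
  · rw [hf.1 k l, hg.1 k l, key l k hlk]

/-- Coefficients at the `Q_{m,j}` with `j ≥ 0` may be prescribed arbitrarily, subject to
reality of the coefficient at `j = 0`. -/
theorem Hspace_exists (n : ℕ) (hn : 5 ≤ n) (m : ℕ) (c : ℕ → ℂ)
    (hc : (starRingEnd ℂ) (c 0) = c 0) :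
    ∃ χ ∈ Hspace n (m : ℚ), ∀ j r, r + 2 * j = m → χ (r + n * j) r = c j := by
  classical
  refine ⟨fun k l => if IsResMono n (m : ℚ) k l then
    (if l ≤ k then c ((k - l) / n) else (starRingEnd ℂ) (c ((l - k) / n))) else 0,
    ⟨fun k l => ?_, fun k l hkl => ?_⟩, fun j r h => ?_⟩
  · by_cases hr : IsResMono n (m : ℚ) k l
    · have hr' := isResMono_comm.1 hr
      simp only [hr, hr', if_true]
      rcases lt_trichotomy k l with h | rfl | h
      · rw [if_neg (by omega), if_pos h.le]
      · simp [hc]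
      · rw [if_pos h.le, if_neg (by omega), Complex.conj_conj]
    · have hr' := fun h => hr (isResMono_comm.1 h)
      simp only [if_neg hr, if_neg hr', map_zero]
  · by_contra hr
    exact hkl (if_neg hr)
  · have hn0 : 0 < n := by omega
    simp [isResMono_of n hn h, Nat.mul_div_cancel_left j hn0]

theorem mul_mono (f : FS2) (a b k l : ℕ) :
    FS2.mul f (FS2.mono a b) k l = if a ≤ k ∧ b ≤ l then f (k - a) (l - b) else 0 := by
  unfold FS2.mul FS2.mono
  split_ifs with h
  · rw [Finset.sum_eq_single (k - a), Finset.sum_eq_single (l - b)]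
    · rw [if_pos (by omega), mul_one]
    · intro q hq hne
      rw [Finset.mem_range] at hq
      rw [if_neg (by omega), mul_zero]
    · intro hq
      exact absurd (Finset.mem_range.2 (by omega)) hq
    · intro q hq hne
      rw [Finset.mem_range] at hq
      refine Finset.sum_eq_zero fun q' _ => ?_
      rw [if_neg (by omega), mul_zero]
    · intro hq
      exact absurd (Finset.mem_range.2 (by omega)) hq
  · refine Finset.sum_eq_zero fun q hq => Finset.sum_eq_zero fun q' hq' => ?_
    rw [Finset.mem_range] at hq hq'
    rw [if_neg (by omega), mul_zero]

theorem mul_add_smul (f g h : FS2) (x y : ℂ) (k l : ℕ) :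
    FS2.mul f (x • g + y • h) k l = x * FS2.mul f g k l + y * FS2.mul f h k l := by
  simp only [FS2.mul, Finset.mul_sum, ← Finset.sum_add_distrib]
  refine Finset.sum_congr rfl fun q _ => Finset.sum_congr rfl fun q' _ => ?_
  simp only [Pi.add_apply, Pi.smul_apply, smul_eq_mul]
  ring

theorem dw_h2lead (n : ℕ) (hn : 5 ≤ n) (a0 b0 : ℝ) :
    FS2.dw (h2lead n a0 b0) =
      (2 * a0 : ℂ) • FS2.mono 2 1 + (n * b0 : ℂ) • FS2.mono 0 (n - 1) := by
  funext k l
  simp only [FS2.dw, h2lead, FS2.mono, Pi.add_apply, Pi.smul_apply, smul_eq_mul]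
  rw [if_neg (by omega)]
  by_cases h1 : k = 2 ∧ l = 1
  · obtain ⟨rfl, rfl⟩ := h1
    norm_num
  · rw [if_neg (by omega), if_neg h1]
    by_cases h2 : k = 0 ∧ l = n - 1
    · rw [if_pos (by omega), if_pos h2]
      have : ((l : ℂ) + 1) = n := by
        have : l + 1 = n := by omega
        exact_mod_cast this
      rw [this]; ring
    · rw [if_neg (by omega), if_neg h2]; ring

theorem dz_h2lead (n : ℕ) (hn : 5 ≤ n) (a0 b0 : ℝ) :
    FS2.dz (h2lead n a0 b0) =
      (2 * a0 : ℂ) • FS2.mono 1 2 + (n * b0 : ℂ) • FS2.mono (n - 1) 0 := by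
  funext k l
  simp only [FS2.dz, h2lead, FS2.mono, Pi.add_apply, Pi.smul_apply, smul_eq_mul]
  by_cases h1 : k = 1 ∧ l = 2
  · obtain ⟨rfl, rfl⟩ := h1
    rw [if_neg (by omega), if_neg (c := (1 = n - 1 ∧ 2 = 0)) (by omega)]
    norm_num
  · rw [if_neg h1]
    by_cases h2 : k = n - 1 ∧ l = 0
    · rw [if_pos (by omega), if_pos h2]
      have : ((k : ℂ) + 1) = n := by
        have : k + 1 = n := by omega
        exact_mod_cast this
      rw [this]; ring
    · rw [if_neg (by omega), if_neg (by omega), if_neg (by omega), if_neg h2]; ring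

/-- The coefficients of `{χ, h₂}` for an arbitrary series `χ`. The side conditions only guard
against truncated subtraction in the exponents. -/
theorem pb_h2lead (n : ℕ) (hn : 5 ≤ n) (a0 b0 : ℝ) (χ : FS2) (k l : ℕ) :
    FS2.pb χ (h2lead n a0 b0) k l =
      2 * a0 * (if 1 ≤ k ∧ 1 ≤ l then ((k : ℂ) - l) * χ (k - 1) (l - 1) else 0)
      + n * b0 * (if n ≤ l + 1 then ((k : ℂ) + 1) * χ (k + 1) (l + 1 - n) else 0)
      - n * b0 * (if n ≤ k + 1 then ((l : ℂ) + 1) * χ (k + 1 - n) (l + 1) else 0) := by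
  have e1 : (if 2 ≤ k ∧ 1 ≤ l then FS2.dz χ (k - 2) (l - 1) else 0)
      - (if 1 ≤ k ∧ 2 ≤ l then FS2.dw χ (k - 1) (l - 2) else 0)
      = (if 1 ≤ k ∧ 1 ≤ l then ((k : ℂ) - l) * χ (k - 1) (l - 1) else 0) := by
    rcases k with _ | _ | k <;> rcases l with _ | _ | l <;> simp [FS2.dz, FS2.dw] <;>
      ring
  have e2 : (if 0 ≤ k ∧ n - 1 ≤ l then FS2.dz χ (k - 0) (l - (n - 1)) else 0)
      = (if n ≤ l + 1 then ((k : ℂ) + 1) * χ (k + 1) (l + 1 - n) else 0) := by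
    by_cases h : n ≤ l + 1
    · rw [if_pos h, if_pos (by omega), show l + 1 - n = l - (n - 1) by omega]; rfl
    · rw [if_neg h, if_neg (by omega)]
  have e3 : (if n - 1 ≤ k ∧ 0 ≤ l then FS2.dw χ (k - (n - 1)) (l - 0) else 0)
      = (if n ≤ k + 1 then ((l : ℂ) + 1) * χ (k + 1 - n) (l + 1) else 0) := by
    by_cases h : n ≤ k + 1
    · rw [if_pos h, if_pos (by omega), show k + 1 - n = k - (n - 1) by omega]; rfl
    · rw [if_neg h, if_neg (by omega)]
  rw [← e1, ← e2, ← e3]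
  simp only [FS2.pb, Pi.sub_apply, dw_h2lead n hn, dz_h2lead n hn, mul_add_smul, mul_mono]
  ring

/-- `L_p` maps real-valued series to `H^n_{p+1}`: interchanging `k` and `l` changes the sign of the
bracket, which the conjugation of the factor `2i` compensates. -/
theorem homOp_mem (n : ℕ) (hn : 5 ≤ n) (a0 b0 : ℝ) (p : ℕ) {χ : FS2}
    (hχ : FS2.IsReal χ) : homOp n a0 b0 p χ ∈ Hspace n ((p + 1 : ℕ) : ℚ) := by
  refine ⟨fun k l => ?_, fun k l hkl => ?_⟩
  · by_cases hr : IsResMono n ((p : ℚ) + 1) k l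
    · have hr' := isResMono_comm.1 hr
      unfold IsResMono at hr hr'
      unfold homOp projRes
      rw [if_pos hr, if_pos hr', Pi.smul_apply, Pi.smul_apply, Pi.smul_apply, Pi.smul_apply,
        pb_h2lead n hn, pb_h2lead n hn, hχ (k - 1), hχ (k + 1), hχ (k + 1 - n)]
      simp only [smul_eq_mul, map_mul, map_add, map_sub, apply_ite (starRingEnd ℂ), map_zero,
        map_natCast, map_ofNat, map_one, Complex.conj_I, Complex.conj_ofReal]
      simp only [and_comm (a := 1 ≤ k)]
      split_ifs <;> ring
    · have hr' := fun h => hr (isResMono_comm.1 h)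
      unfold IsResMono at hr hr'
      unfold homOp projRes
      rw [if_neg hr, if_neg hr', map_zero]
  · by_contra hr
    push_cast at hr
    exact hkl (if_neg hr)

theorem homOp_add (n : ℕ) (hn : 5 ≤ n) (a0 b0 : ℝ) (p : ℕ) (χ χ' : FS2) :
    homOp n a0 b0 p (χ + χ') = homOp n a0 b0 p χ + homOp n a0 b0 p χ' := by
  funext k l
  simp only [homOp, projRes, Pi.add_apply, Pi.smul_apply, pb_h2lead n hn, smul_eq_mul]
  split_ifs <;> ring

theorem homOp_smul (n : ℕ) (hn : 5 ≤ n) (a0 b0 : ℝ) (p : ℕ) (r : ℝ) (χ : FS2) :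
    homOp n a0 b0 p (r • χ) = r • homOp n a0 b0 p χ := by
  funext k l
  simp only [homOp, projRes, Pi.smul_apply, pb_h2lead n hn, smul_eq_mul, Complex.real_smul]
  split_ifs <;> ring

/-- The coefficient of `L_p(χ)` at `Q_{p+1,0}` vanishes. -/
theorem homOp_diag (n : ℕ) (hn : 5 ≤ n) (a0 b0 : ℝ) (p : ℕ) {χ : FS2}
    (hχ : χ ∈ Hspace n (p : ℚ)) : homOp n a0 b0 p χ (p + 1) (p + 1) = 0 := by
  unfold homOp projRes
  split_ifs with h
  swap
  · rfl
  rw [Pi.smul_apply, Pi.smul_apply, pb_h2lead n hn]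
  -- the bracket with `z²z̄²` has the factor `k - l = 0` here, and the preimages under the other
  -- two terms of `h₂` have `δ`-order `p + 4 - n ≠ p`
  have key : n ≤ p + 1 + 1 → χ (p + 1 + 1) (p + 1 + 1 - n) = 0 := by
    intro hle
    refine not_imp_comm.1 (hχ.2 _ _) fun hr => ?_
    obtain ⟨q, hq⟩ : ∃ q, p + 1 + 1 = q + n * 1 := ⟨p + 1 + 1 - n, by omega⟩
    rw [show p + 1 + 1 - n = q by omega, hq, isResMono_iff n hn] at hr
    omega
  have key' : n ≤ p + 1 + 1 → χ (p + 1 + 1 - n) (p + 1 + 1) = 0 := by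
    intro hle
    rw [hχ.1, key hle, map_zero]
  split_ifs with h1 h2
  · rw [key h2, key' h2]; simp
  · simp
  · rw [key (by assumption), key' (by assumption)]; simp
  · simp

/-- The coefficient of `L_p(χ)` at `Q_{p+1,j+1}`, with `r = p - 1 - 2j`: only the coefficients
of `χ` at `Q_{p,j+1}` and `Q_{p,j}` contribute. -/
theorem homOp_coeff (n : ℕ) (hn : 5 ≤ n) (a0 b0 : ℝ) (p : ℕ) {χ : FS2}
    (hχ : χ ∈ Hspace n (p : ℚ)) {j r : ℕ} (h : r + 1 + 2 * j = p) :
    homOp n a0 b0 p χ (r + n * (j + 1)) r =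
      2 * Complex.I * n *
        (2 * (j + 1) * a0 * (if r = 0 then 0 else χ (r - 1 + n * (j + 1)) (r - 1))
          - b0 * (r + 1) * χ (r + 1 + n * j) (r + 1)) := by
  have hres : IsResMono n ((p : ℚ) + 1) (r + n * (j + 1)) r := by
    have := isResMono_of n hn (m := p + 1) (r := r) (j := j + 1) (by omega)
    exact_mod_cast this
  have hle : n ≤ n * (j + 1) := Nat.le_mul_of_pos_right n (by omega)
  unfold IsResMono at hres
  unfold homOp projRes
  rw [if_pos hres, Pi.smul_apply, Pi.smul_apply, pb_h2lead n hn, smul_eq_mul]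
  -- the `z̄ⁿ` part of `h₂` contributes only in `δ`-order `p + n - 3 > p + 1`
  have key : n ≤ r + 1 → χ (r + n * (j + 1) + 1) (r + 1 - n) = 0 := by
    intro hle
    refine not_imp_comm.1 (hχ.2 _ _) fun hr => ?_
    have e : r + n * (j + 1) + 1 = (r + 1 - n) + n * (j + 2) := by
      have : n * (j + 2) = n * (j + 1) + n := by ring
      omega
    rw [e, isResMono_iff n hn] at hr
    omega
  have e0 : (if n ≤ r + 1 then
      (((r + n * (j + 1) : ℕ) : ℂ) + 1) * χ (r + n * (j + 1) + 1) (r + 1 - n) else 0) = 0 := by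
    split_ifs with hh
    · rw [key hh, mul_zero]
    · rfl
  have e3 : r + n * (j + 1) + 1 - n = r + 1 + n * j := by
    have : n * (j + 1) = n * j + n := by ring
    omega
  rw [e0, if_pos (show n ≤ r + n * (j + 1) + 1 by omega), e3]
  rcases r with _ | r
  · simp
    ring
  · rw [if_pos (by omega), if_neg (by omega),
      show r + 1 + n * (j + 1) - 1 = r + 1 - 1 + n * (j + 1) by omega]
    push_cast
    ring

/-- The complement element `s Q_{p+1,0} + t (Q_{p+1,1} + Q_{p+1,-1})`. -/
def complElt (n p : ℕ) (s t : ℝ) : FS2 :=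
  s • FS2.mono (p + 1) (p + 1) +
    t • (FS2.mono (p + n - 1) (p - 1) + FS2.mono (p - 1) (p + n - 1))

theorem compl_coeff (n : ℕ) (hn : 5 ≤ n) (p : ℕ) (hp : 3 ≤ p) (s t : ℝ) {j r : ℕ}
    (h : r + 2 * j = p + 1) :
    complElt n p s t (r + n * j) r = if j = 0 then (s : ℂ) else if j = 1 then (t : ℂ) else 0 := by
  simp only [complElt, FS2.mono, Pi.add_apply, Pi.smul_apply, Complex.real_smul]
  rcases j with _ | _ | j
  · rw [if_pos (by omega), if_neg (by omega), if_neg (by omega)]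
    simp
  · rw [if_neg (by omega), if_pos (by omega), if_neg (by omega)]
    simp
  · rw [if_neg (by omega), if_neg (by omega), if_neg (by omega)]
    simp

theorem compl_mem (n : ℕ) (hn : 5 ≤ n) (p : ℕ) (hp : 3 ≤ p) (s t : ℝ) :
    complElt n p s t ∈ Hspace n ((p + 1 : ℕ) : ℚ) := by
  have hr1 : IsResMono n ((p + 1 : ℕ) : ℚ) (p + 1) (p + 1) :=
    isResMono_of n hn (r := p + 1) (j := 0) rfl
  have hr2 : IsResMono n ((p + 1 : ℕ) : ℚ) (p + n - 1) (p - 1) := by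
    have := isResMono_of n hn (m := p + 1) (r := p - 1) (j := 1) (by omega)
    rwa [show p - 1 + n * 1 = p + n - 1 by omega] at this
  have hr3 := isResMono_comm.1 hr2
  refine ⟨fun k l => ?_, fun k l hkl => ?_⟩
  · simp only [complElt, FS2.mono, Pi.add_apply, Pi.smul_apply, Complex.real_smul, map_add, map_mul,
      Complex.conj_ofReal, apply_ite (starRingEnd ℂ), map_one, map_zero]
    simp only [and_comm (a := l = p + 1), and_comm (a := l = p + n - 1),
      and_comm (a := l = p - 1)]
    ring
  · by_contra hr
    refine hkl ?_
    simp only [complElt, FS2.mono, Pi.add_apply, Pi.smul_apply, Complex.real_smul]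
    rw [if_neg, if_neg, if_neg]
    · simp
    all_goals
      rintro ⟨rfl, rfl⟩
      exact hr (by assumption)

/-- Triviality of the kernel of `(χ, s, t) ↦ L_p(χ) + s Q_{p+1,0} + t (Q_{p+1,1} + Q_{p+1,-1})`. -/
theorem kernel_trivial (n : ℕ) (hn : 5 ≤ n) (a0 b0 : ℝ) (hb : b0 ≠ 0) (p : ℕ) (hp : 3 ≤ p)
    (hodd : Odd p) {χ : FS2} (hχ : χ ∈ Hspace n (p : ℚ)) {s t : ℝ}
    (h : homOp n a0 b0 p χ + complElt n p s t = 0) : χ = 0 ∧ s = 0 ∧ t = 0 := by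
  have hnC : (n : ℂ) ≠ 0 := by exact_mod_cast (by omega : n ≠ 0)
  have hbC : (b0 : ℂ) ≠ 0 := by exact_mod_cast hb
  have hE : ∀ k l, homOp n a0 b0 p χ k l + complElt n p s t k l = 0 :=
    fun k l => congrFun (congrFun h k) l
  obtain ⟨K, hK⟩ := hodd
  have hs : s = 0 := by
    have h1 := hE (p + 1 + n * 0) (p + 1)
    rw [compl_coeff n hn p hp s t (by omega), if_pos rfl] at h1
    have h2 := homOp_diag n hn a0 b0 p hχ
    simp only [mul_zero, add_zero] at h1
    rw [h2, zero_add] at h1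
    exact_mod_cast h1
  -- the coefficient of `χ` at `Q_{p,j}`, `j ≥ 1`, vanishes, by induction on `r = p - 2j`, that is, downwards in `j`
  have hpos : ∀ r j, r + 2 * (j + 1) = p → χ (r + n * (j + 1)) r = 0 := by
    intro r
    induction r using Nat.strong_induction_on with
    | _ r ih =>
      intro j hj
      obtain ⟨r, rfl⟩ : ∃ q, r = q + 1 := ⟨r - 1, by omega⟩
      have h1 := hE (r + n * (j + 1 + 1)) r
      rw [compl_coeff n hn p hp s t (by omega), if_neg (by omega), if_neg (by omega), add_zero,
        homOp_coeff n hn a0 b0 p hχ (by omega)] at h1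
      have h0 : (if r = 0 then 0 else χ (r - 1 + n * (j + 1 + 1)) (r - 1)) = 0 := by
        split_ifs with hr
        · rfl
        · exact ih (r - 1) (by omega) (j + 1) (by omega)
      have hr : (r : ℂ) + 1 ≠ 0 := Nat.cast_add_one_ne_zero r
      rw [h0, mul_zero, zero_sub] at h1
      simpa [hnC, hbC, hr] using h1
  have h1 := hE (p - 1 + n * (0 + 1)) (p - 1)
  rw [compl_coeff n hn p hp s t (by omega), if_neg (by omega), if_pos (by omega),
    homOp_coeff n hn a0 b0 p hχ (by omega), if_neg (by omega),
    hpos (p - 1 - 1) 0 (by omega), show p - 1 + 1 + n * 0 = p by omega,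
    show p - 1 + 1 = p by omega] at h1
  -- `c_0` is real, so the equation at `Q_{p+1,1}` has `c_0` in its imaginary part and `t` in its
  -- real part
  obtain ⟨x, hx⟩ := Complex.conj_eq_iff_real.1 (hχ.1 p p).symm
  have hpe : (((p - 1 : ℕ) : ℂ) + 1) = (p : ℝ) := by
    have : p - 1 + 1 = p := by omega
    exact_mod_cast this
  rw [hx, hpe, mul_zero, zero_sub] at h1
  have hre := congrArg Complex.re h1
  have him := congrArg Complex.im h1
  simp at hre him
  have hpR : p ≠ 0 := by omega
  have hnR : n ≠ 0 := by omega
  have hx0 : x = 0 := by simpa [hb, hpR, hnR] using him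
  refine ⟨Hspace_ext n hn hχ (Submodule.zero_mem _) fun j r hj => ?_, hs, ?_⟩
  · rcases j with _ | j
    · obtain rfl : r = p := by omega
      simp only [mul_zero, add_zero]
      rw [hx, hx0]; simp
    · rw [hpos r j hj]; rfl
  · exact hre

/-- The solution of the two-step recursion `d (r+1) = A r * d (r-1) + B r`, `d 0 = 0`. -/
def recSeq (A B : ℕ → ℂ) : ℕ → ℂ
  | 0 => 0
  | 1 => B 0
  | r + 2 => A (r + 1) * recSeq A B r + B (r + 1)

theorem recSeq_succ (A B : ℕ → ℂ) (r : ℕ) :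
    recSeq A B (r + 1) = A r * (if r = 0 then 0 else recSeq A B (r - 1)) + B r := by
  rcases r with _ | r <;> simp [recSeq]

/-- Surjectivity of the map in `kernel_trivial` onto `H^n_{p+1}`. -/
theorem exists_solution (n : ℕ) (hn : 5 ≤ n) (a0 b0 : ℝ) (hb : b0 ≠ 0) (p : ℕ) (hp : 3 ≤ p)
    (hodd : Odd p) {g : FS2} (hg : g ∈ Hspace n ((p + 1 : ℕ) : ℚ)) :
    ∃ χ ∈ Hspace n (p : ℚ), ∃ s t : ℝ, g = homOp n a0 b0 p χ + complElt n p s t := by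
  have hnC : (n : ℂ) ≠ 0 := by exact_mod_cast (by omega : n ≠ 0)
  have hbC : (b0 : ℂ) ≠ 0 := by exact_mod_cast hb
  obtain ⟨K, hK⟩ := hodd
  -- `d (p - 2j)` is the coefficient of `χ` at `Q_{p,j}` for `j ≥ 1`; the equation at `Q_{p+1,j+1}`,
  -- where `r = p - 1 - 2j`, is a recursion for `d (r + 1)` in terms of `d (r - 1)`
  set J : ℕ → ℕ := fun r => (p - 1 - r) / 2 with hJ
  set d : ℕ → ℂ := recSeq (fun r => 2 * (J r + 1) * a0 / (b0 * (r + 1)))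
    (fun r => -(g (r + n * (J r + 1)) r / (2 * Complex.I * n)) / (b0 * (r + 1))) with hd
  -- the real number `y` and `t` split the equation at `Q_{p+1,1}` into its two real parts
  set w : ℂ := g (p - 1 + n * 1) (p - 1) - 2 * Complex.I * n * (2 * a0 * d (p - 2)) with hw
  set y : ℝ := -(w.im / (2 * n * b0 * p)) with hy
  obtain ⟨χ, hχ, hval⟩ := Hspace_exists n hn p
    (fun j => if j = 0 then (y : ℂ) else d (p - 2 * j)) (by simp)
  refine ⟨χ, hχ, (g (p + 1) (p + 1)).re, w.re, Hspace_ext n hn hg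
    (Submodule.add_mem _ (homOp_mem n hn a0 b0 p hχ.1) (compl_mem n hn p hp _ _)) ?_⟩
  intro j r hj
  rw [Pi.add_apply, Pi.add_apply, compl_coeff n hn p hp _ _ hj]
  rcases j with _ | _ | j
  · obtain rfl : r = p + 1 := by omega
    rw [if_pos rfl]
    simp only [mul_zero, add_zero]
    rw [homOp_diag n hn a0 b0 p hχ, zero_add]
    exact (Complex.conj_eq_iff_re.1 (hg.1 _ _).symm).symm
  · obtain rfl : r = p - 1 := by omega
    rw [homOp_coeff n hn a0 b0 p hχ (by omega), if_neg (by omega), if_neg (by omega),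
      if_pos (by omega), hval 1 (p - 1 - 1) (by omega), hval 0 (p - 1 + 1) (by omega),
      if_neg one_ne_zero, if_pos rfl]
    have hpe : (((p - 1 : ℕ) : ℂ) + 1) = (p : ℂ) := by
      have : p - 1 + 1 = p := by omega
      exact_mod_cast this
    rw [hpe, show p - 2 * 1 = p - 2 by omega]
    have hwe : g (p - 1 + n * (0 + 1)) (p - 1)
        = w + 2 * Complex.I * n * (2 * a0 * d (p - 2)) := by
      rw [hw]; ring_nf
    have hpC : (p : ℂ) ≠ 0 := by exact_mod_cast (by omega : p ≠ 0)
    have hyC : (2 * n * b0 * p * y : ℂ) = -w.im := by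
      rw [hy]; push_cast; field_simp
    rw [hwe]
    conv_lhs => rw [← Complex.re_add_im w]
    linear_combination Complex.I * hyC
  · rw [if_neg (Nat.succ_ne_zero _), if_neg (show j + 1 + 1 ≠ 1 by omega), add_zero,
      homOp_coeff n hn a0 b0 p hχ (j := j + 1) (by omega),
      hval (j + 1) (r + 1) (by omega), if_neg (Nat.succ_ne_zero _),
      show p - 2 * (j + 1) = r + 1 by omega]
    have h1 : (if r = 0 then 0 else χ (r - 1 + n * (j + 1 + 1)) (r - 1))
        = (if r = 0 then 0 else d (r - 1)) := by
      split_ifs with hr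
      · rfl
      · rw [hval (j + 1 + 1) (r - 1) (by omega), if_neg (by omega)]
        congr 1
        omega
    have hJr : J r = j + 1 := by rw [hJ]; show (p - 1 - r) / 2 = j + 1; omega
    have hr : (r : ℂ) + 1 ≠ 0 := Nat.cast_add_one_ne_zero r
    have h2 : d (r + 1) = _ := recSeq_succ _ _ r
    rw [← hd] at h2
    simp only [hJr] at h2
    rw [h1, h2]
    generalize (if r = 0 then 0 else d (r - 1)) = D
    have hI := Complex.I_ne_zero
    push_cast
    field_simp
    ring

/-- **The homological operator at odd δ-order (n ≥ 5).**
For odd `p ≥ 3`, `L_p : H^n_p → H^n_{p+1}` is a well-defined injective real-linear map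
whose image has a two-dimensional complement:
`H^n_{p+1} = L_p(H^n_p) ⊕ span_ℝ{Q_{p+1,0}, Q_{p+1,1} + Q_{p+1,−1}}`. -/
theorem homological_operator_odd
    (n : ℕ) (hn : 5 ≤ n) (a0 b0 : ℝ) (ha : a0 ≠ 0) (hb : b0 ≠ 0)
    (p : ℕ) (hp : 3 ≤ p) (hodd : Odd p) :
    (∀ χ ∈ Hspace n (p : ℚ), homOp n a0 b0 p χ ∈ Hspace n ((p : ℚ) + 1)) ∧
    (∀ χ χ' : FS2, homOp n a0 b0 p (χ + χ') = homOp n a0 b0 p χ + homOp n a0 b0 p χ') ∧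
    (∀ (r : ℝ) (χ : FS2), homOp n a0 b0 p (r • χ) = r • homOp n a0 b0 p χ) ∧
    (∀ χ ∈ Hspace n (p : ℚ), ∀ χ' ∈ Hspace n (p : ℚ),
      homOp n a0 b0 p χ = homOp n a0 b0 p χ' → χ = χ') ∧
    (∀ g ∈ Hspace n ((p : ℚ) + 1), ∃! x : FS2 × ℝ × ℝ,
      x.1 ∈ Hspace n (p : ℚ) ∧
      g = homOp n a0 b0 p x.1 + x.2.1 • FS2.mono (p + 1) (p + 1) +
          x.2.2 • (FS2.mono (p + n - 1) (p - 1) + FS2.mono (p - 1) (p + n - 1))) := by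
  have hcast : ((p : ℚ) + 1) = ((p + 1 : ℕ) : ℚ) := by push_cast; rfl
  have hsub : ∀ χ χ' : FS2,
      homOp n a0 b0 p (χ - χ') = homOp n a0 b0 p χ - homOp n a0 b0 p χ' := by
    intro χ χ'
    rw [eq_sub_iff_add_eq, ← homOp_add n hn, sub_add_cancel]
  refine ⟨fun χ hχ => ?_, homOp_add n hn a0 b0 p, homOp_smul n hn a0 b0 p,
    fun χ hχ χ' hχ' h => ?_, fun g hg => ?_⟩
  · rw [hcast]
    exact homOp_mem n hn a0 b0 p hχ.1
  · refine sub_eq_zero.1 (kernel_trivial n hn a0 b0 hb p hp hodd (s := 0) (t := 0)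
      (Submodule.sub_mem _ hχ hχ') ?_).1
    rw [hsub, h, sub_self]
    simp [complElt]
  · rw [hcast] at hg
    obtain ⟨χ, hχ, s, t, h⟩ := exists_solution n hn a0 b0 hb p hp hodd hg
    refine ⟨(χ, s, t), ⟨hχ, by rw [h, complElt]; exact (add_assoc _ _ _).symm⟩, ?_⟩
    rintro ⟨χ', s', t'⟩ ⟨hχ', h'⟩
    have hk : homOp n a0 b0 p (χ' - χ) + complElt n p (s' - s) (t' - t) = 0 := by
      have h2 := sub_eq_zero.2 (h'.symm.trans h)
      rw [hsub]
      simp only [complElt, sub_smul] at h2 ⊢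
      rw [← h2]
      abel
    obtain ⟨h1, h2, h3⟩ := kernel_trivial n hn a0 b0 hb p hp hodd
      (Submodule.sub_mem _ hχ' hχ) hk
    exact Prod.ext (sub_eq_zero.1 h1) (Prod.ext (sub_eq_zero.1 h2) (sub_eq_zero.1 h3))

end
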